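/- (Lemma 2.1, Benner–Breiten moment matching.) Let σ_1, …, σ_k : ℂ and assume Q is symmetric, and that for each i the matrices G(σ_i), G(2σ_i), Wᵀ * G(σ_i) * V and Wᵀ * G(2σ_i) * V are invertible. Suppose the column span of V contains x1(σ_i) and x2(σ_i, σ_i) for all i, and the column span of W contains y1(2σ_i) and y2(σ_i, σ_i) for all i. Then for each i the reduced quadratic-bilinear system satisfies the Hermite interpolation conditions: H1(σ_i) = Ĥ1(σ_i), H1(2σ_i) = Ĥ1(2σ_i), H2(σ_i, σ_i) = Ĥ2(σ_i, σ_i), deriv (fun s => H2(s, σ_i)) σ_i = deriv (fun s => Ĥ2(s, σ_i)) σ_i, and deriv (fun s => H2(σ_i, s)) σ_i = deriv (fun s => Ĥ2(σ_i, s)) σ_i. -/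

import Mathlib

open Matrix
open scoped Kronecker

noncomputable section

/-- Kronecker product of vectors: `(u ⊗ v) (l, j) = u l * v j`. -/
def vkron {n : ℕ} (u v : Fin n → ℂ) : Fin n × Fin n → ℂ :=
  fun p => u p.1 * v p.2

/-- The matrix pencil `G(s) = s • E - A`. -/
def Gm {n : ℕ} (E A : Matrix (Fin n) (Fin n) ℂ) (s : ℂ) : Matrix (Fin n) (Fin n) ℂ :=
  s • E - A

/-- Primal state of the first subsystem: `x1(s) = G(s)⁻¹ *ᵥ B`. -/
def x1 {n : ℕ} (E A : Matrix (Fin n) (Fin n) ℂ) (B : Fin n → ℂ) (s : ℂ) : Fin n → ℂ :=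
  (Gm E A s)⁻¹ *ᵥ B

/-- First-order transfer function `H1(s) = C ⬝ᵥ x1(s)`. -/
def H1 {n : ℕ} (E A : Matrix (Fin n) (Fin n) ℂ) (B C : Fin n → ℂ) (s : ℂ) : ℂ :=
  C ⬝ᵥ x1 E A B s

/-- Second-order input term `B₂(s1, s2)`. -/
def B2 {n : ℕ} (E A N : Matrix (Fin n) (Fin n) ℂ) (Q : Matrix (Fin n) (Fin n × Fin n) ℂ)
    (B : Fin n → ℂ) (s1 s2 : ℂ) : Fin n → ℂ :=
  Q *ᵥ vkron (x1 E A B s1) (x1 E A B s2) + (1/2 : ℂ) • (N *ᵥ (x1 E A B s1 + x1 E A B s2))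

/-- Primal state of the second subsystem: `x2(s1, s2) = G(s1+s2)⁻¹ *ᵥ B₂(s1, s2)`. -/
def x2 {n : ℕ} (E A N : Matrix (Fin n) (Fin n) ℂ) (Q : Matrix (Fin n) (Fin n × Fin n) ℂ)
    (B : Fin n → ℂ) (s1 s2 : ℂ) : Fin n → ℂ :=
  (Gm E A (s1 + s2))⁻¹ *ᵥ B2 E A N Q B s1 s2

/-- Second-order (symmetric) transfer function `H2(s1, s2) = C ⬝ᵥ x2(s1, s2)`. -/
def H2 {n : ℕ} (E A N : Matrix (Fin n) (Fin n) ℂ) (Q : Matrix (Fin n) (Fin n × Fin n) ℂ)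
    (B C : Fin n → ℂ) (s1 s2 : ℂ) : ℂ :=
  C ⬝ᵥ x2 E A N Q B s1 s2

/-- Dual state of the first subsystem: `y1(s) = (G(s)ᵀ)⁻¹ *ᵥ C`. -/
def y1 {n : ℕ} (E A : Matrix (Fin n) (Fin n) ℂ) (C : Fin n → ℂ) (s : ℂ) : Fin n → ℂ :=
  ((Gm E A s)ᵀ)⁻¹ *ᵥ C

/-- Mode-2 matricization: `Q⁽²⁾ j (l, i) = Q i (l, j)`. -/
def mode2 {n : ℕ} (Q : Matrix (Fin n) (Fin n × Fin n) ℂ) : Matrix (Fin n) (Fin n × Fin n) ℂ :=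
  fun j p => Q p.2 (p.1, j)

/-- Dual output term `C₂(s1, s2)`. -/
def C2 {n : ℕ} (E A N : Matrix (Fin n) (Fin n) ℂ) (Q : Matrix (Fin n) (Fin n × Fin n) ℂ)
    (B C : Fin n → ℂ) (s1 s2 : ℂ) : Fin n → ℂ :=
  mode2 Q *ᵥ vkron (x1 E A B s2) (y1 E A C (s1 + s2)) +
    (1/2 : ℂ) • (Nᵀ *ᵥ y1 E A C (s1 + s2))

/-- Dual state of the second subsystem: `y2(s1, s2) = (G(s1)ᵀ)⁻¹ *ᵥ C₂(s1, s2)`. -/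
def y2 {n : ℕ} (E A N : Matrix (Fin n) (Fin n) ℂ) (Q : Matrix (Fin n) (Fin n × Fin n) ℂ)
    (B C : Fin n → ℂ) (s1 s2 : ℂ) : Fin n → ℂ :=
  ((Gm E A s1)ᵀ)⁻¹ *ᵥ C2 E A N Q B C s1 s2

/-- `Q` is symmetric: `Q *ᵥ (u ⊗ v) = Q *ᵥ (v ⊗ u)` for all `u, v`. -/
def QSymm {n : ℕ} (Q : Matrix (Fin n) (Fin n × Fin n) ℂ) : Prop :=
  ∀ u v : Fin n → ℂ, Q *ᵥ vkron u v = Q *ᵥ vkron v u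

/-- Euclidean (ℓ²) norm of a vector in `Fin n → ℂ`. -/
def vnorm {n : ℕ} (v : Fin n → ℂ) : ℝ := ‖(WithLp.equiv 2 (Fin n → ℂ)).symm v‖

/-- ℓ²-induced operator norm of a square complex matrix. -/
def mnorm {n : ℕ} (M : Matrix (Fin n) (Fin n) ℂ) : ℝ := ‖Matrix.toEuclideanCLM (𝕜 := ℂ) M‖


section helpers

attribute [local instance] Matrix.linftyOpNormedRing Matrix.linftyOpNormedAlgebra
theorem aux_inv_entry {n : ℕ} (E A : Matrix (Fin n) (Fin n) ℂ) (s : ℂ)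
    (h : IsUnit (Gm E A s)) (i j : Fin n) :
    HasDerivAt (fun t => (Gm E A t)⁻¹ i j)
      ((-((Gm E A s)⁻¹ * E * (Gm E A s)⁻¹)) i j) s := by
  have hG : HasDerivAt (fun t => Gm E A t) E s := by
    have := ((hasDerivAt_id s).smul_const E).sub_const A
    simp only [one_smul, id] at this
    exact this
  obtain ⟨u, hu⟩ := h
  have h1 := hasFDerivAt_ringInverse (𝕜 := ℂ) u
  rw [hu] at h1
  have h2 := h1.comp_hasDerivAt s hG
  have hui : ((u⁻¹ : (Matrix (Fin n) (Fin n) ℂ)ˣ) : Matrix (Fin n) (Fin n) ℂ)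
      = (Gm E A s)⁻¹ := by
    rw [← hu]; exact Matrix.coe_units_inv u
  have h3 : HasDerivAt (fun t => (Gm E A t)⁻¹)
      (-((Gm E A s)⁻¹ * E * (Gm E A s)⁻¹)) s := by
    have e : (fun t => (Gm E A t)⁻¹) = Ring.inverse ∘ (fun t => Gm E A t) := by
      funext t; exact Matrix.nonsing_inv_eq_ringInverse _
    rw [e]
    refine h2.congr_deriv ?_
    simp [hui]
  have h4 : HasDerivAt (fun t => (Matrix.entryLinearMap ℂ ℂ i j).toContinuousLinearMap
      ((Gm E A t)⁻¹)) _ s :=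
    ((Matrix.entryLinearMap ℂ ℂ i j).toContinuousLinearMap.hasFDerivAt).comp_hasDerivAt s h3
  exact h4

theorem aux_mulVec {m p : Type*} [Fintype m] [Fintype p] {M : ℂ → Matrix m p ℂ}
    {M' : Matrix m p ℂ} {v : ℂ → p → ℂ} {v' : p → ℂ} {s : ℂ}
    (hM : ∀ i j, HasDerivAt (fun t => M t i j) (M' i j) s)
    (hv : ∀ j, HasDerivAt (fun t => v t j) (v' j) s) (i : m) :
    HasDerivAt (fun t => (M t *ᵥ v t) i) ((M' *ᵥ v s + M s *ᵥ v') i) s := by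
  have := HasDerivAt.fun_sum (u := Finset.univ) (fun j _ => (hM i j).mul (hv j))
  simpa [Matrix.mulVec, dotProduct, Finset.sum_add_distrib] using this

theorem aux_dot_mode2 {n : ℕ} (Q : Matrix (Fin n) (Fin n × Fin n) ℂ) (x y z : Fin n → ℂ) :
    (mode2 Q *ᵥ vkron x y) ⬝ᵥ z = y ⬝ᵥ (Q *ᵥ vkron x z) := by
  simp only [mulVec, dotProduct, mode2, vkron, Finset.sum_mul, Finset.mul_sum,
    Fintype.sum_prod_type]
  -- sums over (j, l, i) against (i, l, j)
  rw [Finset.sum_comm]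
  conv_rhs => rw [Finset.sum_comm]
  refine Finset.sum_congr rfl fun l _ => ?_
  rw [Finset.sum_comm]
  exact Finset.sum_congr rfl fun a _ => Finset.sum_congr rfl fun b _ => by ring

theorem aux_dual {n : ℕ} (M : Matrix (Fin n) (Fin n) ℂ) (c b : Fin n → ℂ) :
    c ⬝ᵥ (M⁻¹ *ᵥ b) = ((Mᵀ)⁻¹ *ᵥ c) ⬝ᵥ b := by
  rw [← Matrix.transpose_nonsing_inv, Matrix.dotProduct_mulVec, Matrix.mulVec_transpose]

theorem aux_symm {n : ℕ} (E A N : Matrix (Fin n) (Fin n) ℂ)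
    (Q : Matrix (Fin n) (Fin n × Fin n) ℂ) (B C : Fin n → ℂ) (hQ : QSymm Q) (s t : ℂ) :
    H2 E A N Q B C s t = H2 E A N Q B C t s := by
  unfold H2 x2 B2
  rw [hQ, add_comm s t, add_comm (x1 E A B s)]

theorem aux_deriv {n : ℕ} (E A N : Matrix (Fin n) (Fin n) ℂ)
    (Q : Matrix (Fin n) (Fin n × Fin n) ℂ) (B C : Fin n → ℂ) (hQ : QSymm Q) (s : ℂ)
    (h : IsUnit (Gm E A s)) (h2 : IsUnit (Gm E A (2 * s))) :
    HasDerivAt (fun t => H2 E A N Q B C t s)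
      (-(y1 E A C (2 * s) ⬝ᵥ (E *ᵥ x2 E A N Q B s s))
        - y2 E A N Q B C s s ⬝ᵥ (E *ᵥ x1 E A B s)) s := by
  rw [two_mul] at *
  set x' : Fin n → ℂ := -((Gm E A s)⁻¹ *ᵥ (E *ᵥ x1 E A B s)) with hx'
  have hx : ∀ j, HasDerivAt (fun t => x1 E A B t j) (x' j) s := by
    intro j
    have := aux_mulVec (v := fun _ => B) (v' := 0) (aux_inv_entry E A s h)
      (fun j => hasDerivAt_const s (B j)) j
    refine this.congr_deriv ?_
    simp [hx', x1, Matrix.neg_mulVec, Matrix.mulVec_mulVec, Matrix.mul_assoc]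
  have hk : ∀ p, HasDerivAt (fun t => vkron (x1 E A B t) (x1 E A B s) p)
      (vkron x' (x1 E A B s) p) s := fun p => (hx p.1).mul_const _
  have hB : ∀ j, HasDerivAt (fun t => B2 E A N Q B t s j)
      ((Q *ᵥ vkron x' (x1 E A B s) + (1/2 : ℂ) • (N *ᵥ x')) j) s := by
    intro j
    have a1 := aux_mulVec (M := fun _ => Q) (M' := 0)
      (fun i j => hasDerivAt_const s (Q i j)) hk j
    have a2 := aux_mulVec (M := fun _ => N) (M' := 0)
      (v := fun t => x1 E A B t + x1 E A B s) (v' := x')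
      (fun i j => hasDerivAt_const s (N i j)) (fun j => (hx j).add_const _) j
    have := a1.add (a2.const_mul (1/2 : ℂ))
    refine this.congr_deriv ?_
    simp
  have hG : ∀ i j, HasDerivAt (fun t => (Gm E A (t + s))⁻¹ i j)
      ((-((Gm E A (s + s))⁻¹ * E * (Gm E A (s + s))⁻¹)) i j) s := fun i j =>
    (aux_inv_entry E A (s + s) h2 i j).comp_add_const s s
  have hX := fun j => aux_mulVec hG hB j
  have hH := aux_mulVec (m := Unit) (M := fun _ _ => C) (M' := 0)
    (fun i j => hasDerivAt_const s (C j)) hX ()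
  refine hH.congr_deriv ?_
  simp only [Matrix.zero_mulVec, zero_add]
  change C ⬝ᵥ _ = _
  have hz : (-((Gm E A (s + s))⁻¹ * E * (Gm E A (s + s))⁻¹)) *ᵥ B2 E A N Q B s s
      = -((Gm E A (s + s))⁻¹ *ᵥ (E *ᵥ x2 E A N Q B s s)) := by
    simp [x2, Matrix.neg_mulVec, Matrix.mulVec_mulVec, Matrix.mul_assoc]
  have hw : y2 E A N Q B C s s ⬝ᵥ (E *ᵥ x1 E A B s)
      = - (y1 E A C (s + s) ⬝ᵥ (Q *ᵥ vkron x' (x1 E A B s) + (1/2 : ℂ) • (N *ᵥ x'))) := by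
    have : C2 E A N Q B C s s ⬝ᵥ x'
       = y1 E A C (s + s) ⬝ᵥ (Q *ᵥ vkron x' (x1 E A B s) + (1/2 : ℂ) • (N *ᵥ x')) := by
      rw [hQ x', C2, add_dotProduct, aux_dot_mode2, dotProduct_add, smul_dotProduct,
        dotProduct_smul, Matrix.dotProduct_mulVec _ N, Matrix.mulVec_transpose]
    rw [← this, y2, ← aux_dual, hx', dotProduct_neg, neg_neg]
  rw [hz, hw, dotProduct_add, dotProduct_neg, aux_dual, aux_dual]
  simp only [y1]
  ring

theorem aux_pencil {n r : ℕ} (E A : Matrix (Fin n) (Fin n) ℂ) (V W : Matrix (Fin n) (Fin r) ℂ)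
    (s : ℂ) : Gm (Wᵀ * E * V) (Wᵀ * A * V) s = Wᵀ * Gm E A s * V := by
  simp [Gm, Matrix.mul_sub, Matrix.sub_mul]

theorem aux_vkron {n r : ℕ} (V : Matrix (Fin n) (Fin r) ℂ) (u v : Fin r → ℂ) :
    (V ⊗ₖ V) *ᵥ vkron u v = vkron (V *ᵥ u) (V *ᵥ v) := by
  ext ⟨i, j⟩
  simp only [mulVec, dotProduct, vkron, Matrix.kroneckerMap_apply, Fintype.sum_prod_type,
    Finset.sum_mul_sum]
  exact Finset.sum_congr rfl fun a _ => Finset.sum_congr rfl fun b _ => by ring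

theorem aux_solve {n r : ℕ} (M : Matrix (Fin n) (Fin n) ℂ) (V W : Matrix (Fin n) (Fin r) ℂ)
    (hM : IsUnit M) (hr : IsUnit (Wᵀ * M * V)) (b : Fin n → ℂ) (c : Fin r → ℂ)
    (h : M⁻¹ *ᵥ b = V *ᵥ c) : (Wᵀ * M * V)⁻¹ *ᵥ (Wᵀ *ᵥ b) = c := by
  have hb : b = M *ᵥ (V *ᵥ c) := by
    rw [← h, Matrix.mulVec_mulVec, Matrix.mul_nonsing_inv _
      ((Matrix.isUnit_iff_isUnit_det _).1 hM), Matrix.one_mulVec]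
  have : Wᵀ *ᵥ b = (Wᵀ * M * V) *ᵥ c := by
    rw [hb]; simp [Matrix.mulVec_mulVec, Matrix.mul_assoc]
  rw [this, Matrix.mulVec_mulVec, Matrix.nonsing_inv_mul _
      ((Matrix.isUnit_iff_isUnit_det _).1 hr), Matrix.one_mulVec]

theorem aux_solveT {n r : ℕ} (M : Matrix (Fin n) (Fin n) ℂ) (V W : Matrix (Fin n) (Fin r) ℂ)
    (hM : IsUnit M) (hr : IsUnit (Wᵀ * M * V)) (b : Fin n → ℂ) (c : Fin r → ℂ)
    (h : (Mᵀ)⁻¹ *ᵥ b = W *ᵥ c) : ((Wᵀ * M * V)ᵀ)⁻¹ *ᵥ (Vᵀ *ᵥ b) = c := by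
  have e : (Wᵀ * M * V)ᵀ = Vᵀ * Mᵀ * W := by simp [Matrix.mul_assoc]
  have hr' := (Matrix.isUnit_transpose (Wᵀ * M * V)).2 hr
  rw [e] at hr' ⊢
  exact aux_solve _ _ _ ((Matrix.isUnit_transpose M).2 hM) hr' b c h

theorem aux_ext {r : ℕ} {u v : Fin r → ℂ} (h : ∀ z, u ⬝ᵥ z = v ⬝ᵥ z) : u = v :=
  dotProduct_eq _ _ h

end helpers

theorem benner_breiten_moment_matching {n r k : ℕ}
    (E A N : Matrix (Fin n) (Fin n) ℂ) (Q : Matrix (Fin n) (Fin n × Fin n) ℂ)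
    (B C : Fin n → ℂ) (V W : Matrix (Fin n) (Fin r) ℂ) (σ : Fin k → ℂ)
    (hQ : QSymm Q)
    (hG : ∀ i, IsUnit (Gm E A (σ i))) (hG2 : ∀ i, IsUnit (Gm E A (2 * σ i)))
    (hGr : ∀ i, IsUnit (Wᵀ * Gm E A (σ i) * V))
    (hGr2 : ∀ i, IsUnit (Wᵀ * Gm E A (2 * σ i) * V))
    (hVx1 : ∀ i, ∃ c : Fin r → ℂ, x1 E A B (σ i) = V *ᵥ c)
    (hVx2 : ∀ i, ∃ c : Fin r → ℂ, x2 E A N Q B (σ i) (σ i) = V *ᵥ c)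
    (hWy1 : ∀ i, ∃ d : Fin r → ℂ, y1 E A C (2 * σ i) = W *ᵥ d)
    (hWy2 : ∀ i, ∃ d : Fin r → ℂ, y2 E A N Q B C (σ i) (σ i) = W *ᵥ d) :
    ∀ i,
      H1 E A B C (σ i) =
        H1 (Wᵀ * E * V) (Wᵀ * A * V) (Wᵀ *ᵥ B) (Vᵀ *ᵥ C) (σ i) ∧
      H1 E A B C (2 * σ i) =
        H1 (Wᵀ * E * V) (Wᵀ * A * V) (Wᵀ *ᵥ B) (Vᵀ *ᵥ C) (2 * σ i) ∧
      H2 E A N Q B C (σ i) (σ i) =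
        H2 (Wᵀ * E * V) (Wᵀ * A * V) (Wᵀ * N * V) (Wᵀ * Q * (V ⊗ₖ V))
          (Wᵀ *ᵥ B) (Vᵀ *ᵥ C) (σ i) (σ i) ∧
      deriv (fun s => H2 E A N Q B C s (σ i)) (σ i) =
        deriv (fun s => H2 (Wᵀ * E * V) (Wᵀ * A * V) (Wᵀ * N * V) (Wᵀ * Q * (V ⊗ₖ V))
          (Wᵀ *ᵥ B) (Vᵀ *ᵥ C) s (σ i)) (σ i) ∧
      deriv (fun s => H2 E A N Q B C (σ i) s) (σ i) =
        deriv (fun s => H2 (Wᵀ * E * V) (Wᵀ * A * V) (Wᵀ * N * V) (Wᵀ * Q * (V ⊗ₖ V))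
          (Wᵀ *ᵥ B) (Vᵀ *ᵥ C) (σ i) s) (σ i) := by
  
  intro i
  obtain ⟨c, hc⟩ := hVx1 i
  obtain ⟨c2, hc2⟩ := hVx2 i
  obtain ⟨d, hd⟩ := hWy1 i
  obtain ⟨d2, hd2⟩ := hWy2 i
  have g := hG i
  have g2 := hG2 i
  have gr := hGr i
  have gr2 := hGr2 i
  generalize σ i = s at *
  have two : s + s = 2 * s := (two_mul s).symm
  have kx : x1 (Wᵀ * E * V) (Wᵀ * A * V) (Wᵀ *ᵥ B) s = c := by
    rw [x1, aux_pencil]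
    exact aux_solve _ _ _ g gr _ _ hc
  have ky : y1 (Wᵀ * E * V) (Wᵀ * A * V) (Vᵀ *ᵥ C) (2 * s) = d := by
    rw [y1, aux_pencil]
    exact aux_solveT _ _ _ g2 gr2 _ _ hd
  have kx2 : x2 (Wᵀ * E * V) (Wᵀ * A * V) (Wᵀ * N * V) (Wᵀ * Q * (V ⊗ₖ V)) (Wᵀ *ᵥ B) s s
      = c2 := by
    have e : B2 (Wᵀ * E * V) (Wᵀ * A * V) (Wᵀ * N * V) (Wᵀ * Q * (V ⊗ₖ V)) (Wᵀ *ᵥ B) s s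
        = Wᵀ *ᵥ B2 E A N Q B s s := by
      rw [B2, B2, kx, hc, ← Matrix.mulVec_mulVec, aux_vkron, ← Matrix.mulVec_mulVec,
        ← Matrix.mulVec_mulVec, ← Matrix.mulVec_mulVec, Matrix.mulVec_add V, Matrix.mulVec_add Wᵀ,
        Matrix.mulVec_smul]
    rw [x2, aux_pencil, e, two]
    rw [x2, two] at hc2
    exact aux_solve _ _ _ g2 gr2 _ _ hc2
  have ky2 : y2 (Wᵀ * E * V) (Wᵀ * A * V) (Wᵀ * N * V) (Wᵀ * Q * (V ⊗ₖ V)) (Wᵀ *ᵥ B)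
      (Vᵀ *ᵥ C) s s = d2 := by
    have e : C2 (Wᵀ * E * V) (Wᵀ * A * V) (Wᵀ * N * V) (Wᵀ * Q * (V ⊗ₖ V)) (Wᵀ *ᵥ B)
        (Vᵀ *ᵥ C) s s = Vᵀ *ᵥ C2 E A N Q B C s s := by
      apply aux_ext
      intro z
      rw [C2, C2, two, kx, ky, hc, hd, Matrix.mulVec_transpose V, ← Matrix.dotProduct_mulVec,
        add_dotProduct, add_dotProduct, aux_dot_mode2, aux_dot_mode2, smul_dotProduct,
        smul_dotProduct, Matrix.mulVec_transpose, Matrix.mulVec_transpose,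
        ← Matrix.dotProduct_mulVec, ← Matrix.dotProduct_mulVec, ← Matrix.mulVec_mulVec,
        aux_vkron, ← Matrix.mulVec_mulVec, ← Matrix.mulVec_mulVec, ← Matrix.mulVec_mulVec,
        Matrix.dotProduct_mulVec d, Matrix.dotProduct_mulVec d, Matrix.vecMul_transpose]
    rw [y2, aux_pencil, e]
    exact aux_solveT _ _ _ g gr _ _ hd2
  have hQr : QSymm (Wᵀ * Q * (V ⊗ₖ V)) := by
    intro u v
    simp only [← Matrix.mulVec_mulVec, aux_vkron]
    rw [hQ]
  have hdr : deriv (fun t => H2 E A N Q B C t s) s =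
        deriv (fun t => H2 (Wᵀ * E * V) (Wᵀ * A * V) (Wᵀ * N * V) (Wᵀ * Q * (V ⊗ₖ V))
          (Wᵀ *ᵥ B) (Vᵀ *ᵥ C) t s) s := by
    rw [(aux_deriv E A N Q B C hQ s g g2).deriv, (aux_deriv _ _ _ _ _ _ hQr s
      (by rw [aux_pencil]; exact gr) (by rw [aux_pencil]; exact gr2)).deriv,
      kx, ky, kx2, ky2, hc, hc2, hd, hd2]
    have key : ∀ (a b : Fin r → ℂ), (W *ᵥ a) ⬝ᵥ (E *ᵥ (V *ᵥ b)) = a ⬝ᵥ ((Wᵀ * E * V) *ᵥ b) := by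
      intro a b
      rw [← Matrix.mulVec_mulVec, ← Matrix.mulVec_mulVec, Matrix.dotProduct_mulVec a,
        Matrix.vecMul_transpose]
    rw [key, key]
  have out : ∀ b, C ⬝ᵥ (V *ᵥ b) = (Vᵀ *ᵥ C) ⬝ᵥ b := by
    intro b
    rw [Matrix.dotProduct_mulVec, Matrix.mulVec_transpose]
  refine ⟨?_, ?_, ?_, hdr, ?_⟩
  · rw [H1, H1, kx, hc, out]
  · rw [H1, H1, x1, x1, aux_dual, aux_dual]
    change y1 E A C (2 * s) ⬝ᵥ B =
      y1 (Wᵀ * E * V) (Wᵀ * A * V) (Vᵀ *ᵥ C) (2 * s) ⬝ᵥ (Wᵀ *ᵥ B)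
    rw [ky, hd, Matrix.dotProduct_mulVec d, Matrix.vecMul_transpose]
  · rw [H2, H2, kx2, hc2, out]
  · simp only [aux_symm _ _ _ _ _ _ hQ s, aux_symm _ _ _ _ _ _ hQr s]
    exact hdr
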